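/- For every integer k ≥ 1 and every δ > 0 there exists n_0 such that for all n ≥ n_0, every n-vertex undirected graph G with nonnegative, polynomially bounded edge weights, and every S ⊆ V with |S| = σ, there exists a subgraph G* ⊆ G with at most n^δ·(n + σ^{1+1/k}) edges such that dist_{G*}(s,v) ≤ (4k−1+δ)·dist_G(s,v) for every s ∈ S and v ∈ V. -/

import Mathlib

/-!
The spanner is a near-exact distance preserver for a small set of pairs. Three ingredients:

* **Missing spanner.** Take a Thorup–Zwick hierarchy `V = A 0 ⊇ A 1 ⊇ ⋯ ⊇ A K = ∅` and let `E` be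
  the union of the shortest-path trees of all clusters. Its size is the total size of the bunches,
  `O(K n^(1+2η))`, and it contains a shortest path from `u` to every vertex in a bunch of `u`. By
  the induction on levels behind Thorup–Zwick hopsets (`replace_or_near`), every pair is joined by
  a walk of weight at most `(1 + 8K/m)` times the distance with only `β = hops m (K - 1)` edges
  outside `E` (`exists_missing_spanner`); `β` depends on `K` and `m` alone.
* **Preserver.** Hence for any set `P` of pairs, adding `2β|P|` edges to `E` preserves the distances
  of all pairs of `P` up to the factor `1 + 8K/m` (`exists_preserver`).
* **Pairs.** Let `P` consist of the pairs `(v, p v)` with `p v` the source nearest to `v`, and of the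
  bunch pairs of a `k`-level Thorup–Zwick hierarchy on `S`, about `k σ^(1+1/k)` of them. For `s ∈ S`
  the pivot argument (`exists_pivot`) joins `s` to `p v` with stretch `2k - 1`, and
  `dist s (p v) ≤ 2 dist s v`, so that `v` is reached with stretch `2(2k - 1) + 1 = 4k - 1`, up to
  the factor `1 + 8K/m` (`exists_sourcewise`).

Sampling is derandomized by a greedy hitting set (`exists_level`); its logarithmic loss and all
constants are absorbed in `n ^ δ`. The argument is insensitive to the magnitude of the weights.
Zero weights only matter for the shortest-path trees, where ties are broken by the number of edges.
-/

open scoped ENNReal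

namespace Hopsets

/-- A weighted directed graph on vertex type `V`: a finite edge set together
with a weight function. -/
structure WDigraph (V : Type) where
  edges : Finset (V × V)
  w : V × V → ℝ

variable {V : Type}

/-- All edge weights are nonnegative. -/
def WDigraph.Nonneg (G : WDigraph V) : Prop := ∀ e, 0 ≤ G.w e

/-- Edge weights are polynomially bounded (degree `q`) in the number of vertices. -/
def WDigraph.PolyBounded [Fintype V] (G : WDigraph V) (q : ℕ) : Prop :=
  ∀ e ∈ G.edges, G.w e ≤ (Fintype.card V : ℝ) ^ q

/-- `G` encodes an undirected graph: edges come in symmetric pairs of equal weight. -/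
def WDigraph.Symmetric (G : WDigraph V) : Prop :=
  ∀ e ∈ G.edges, (e.2, e.1) ∈ G.edges ∧ G.w (e.2, e.1) = G.w e

/-- `G` is unweighted: every edge has weight `1`. -/
def WDigraph.Unweighted (G : WDigraph V) : Prop := ∀ e, G.w e = 1

/-- `IsWalkFrom G u v l` : the list of edges `l` forms a walk from `u` to `v` in `G`. -/
def IsWalkFrom (G : WDigraph V) : V → V → List (V × V) → Prop
  | u, v, [] => u = v
  | u, v, e :: l => e ∈ G.edges ∧ e.1 = u ∧ IsWalkFrom G e.2 v l

/-- The total weight of a walk, as an extended nonnegative real. -/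
noncomputable def walkWeight (G : WDigraph V) (l : List (V × V)) : ℝ≥0∞ :=
  ENNReal.ofReal ((l.map G.w).sum)

/-- `β`-hop-bounded distance: the infimum weight of a `u`-`v` walk with at most `β` edges. -/
noncomputable def WDigraph.hopDist (G : WDigraph V) (β : ℕ) (u v : V) : ℝ≥0∞ :=
  ⨅ l ∈ {l : List (V × V) | IsWalkFrom G u v l ∧ l.length ≤ β}, walkWeight G l

/-- Distance: infimum weight of a `u`-`v` walk (`∞` if there is none). -/
noncomputable def WDigraph.dist (G : WDigraph V) (u v : V) : ℝ≥0∞ :=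
  ⨅ l ∈ {l : List (V × V) | IsWalkFrom G u v l}, walkWeight G l

/-- `v` is reachable from `u` in `G`. -/
def WDigraph.Reachable (G : WDigraph V) (u v : V) : Prop :=
  ∃ l, IsWalkFrom G u v l

/-- The graph `G ∪ H` obtained by adding the edge set `H`, each added edge `(x,y)`
weighted by `dist_G(x,y)`. -/
noncomputable def WDigraph.augment [DecidableEq V] (G : WDigraph V) (H : Finset (V × V)) :
    WDigraph V where
  edges := G.edges ∪ H
  w := fun e => if e ∈ H then (G.dist e.1 e.2).toReal else G.w e

/-- `H` is a `(β,ε)`-hopset for `G`: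
`dist_G(u,v) ≤ dist^{(β)}_{G∪H}(u,v) ≤ (1+ε)·dist_G(u,v)` for all `u, v`. -/
def IsHopset [DecidableEq V] (G : WDigraph V) (β : ℕ) (ε : ℝ) (H : Finset (V × V)) : Prop :=
  ∀ u v, G.dist u v ≤ (G.augment H).hopDist β u v ∧
    (G.augment H).hopDist β u v ≤ ENNReal.ofReal (1 + ε) * G.dist u v

/-- The subgraph of `G` with edge set `E'` (same weights). -/
def WDigraph.sub (G : WDigraph V) (E' : Finset (V × V)) : WDigraph V :=
  ⟨E', G.w⟩

/-- `E'` (a subgraph of `G`) is an `r`-missing `t`-spanner: for every reachable pair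
`(u,v)` there is a `u`-`v` walk in `G` of weight at most `t·dist_G(u,v)` with at most
`r` edges outside `E'`. -/
def IsMissingSpanner [DecidableEq V] (G : WDigraph V) (E' : Finset (V × V))
    (r : ℕ) (t : ℝ) : Prop :=
  ∀ u v, G.Reachable u v → ∃ l, IsWalkFrom G u v l ∧
    walkWeight G l ≤ ENNReal.ofReal t * G.dist u v ∧
    (l.filter (fun e => decide (e ∉ E'))).length ≤ r

end Hopsets

namespace Hopsets

/-! ### Walks and shortest walks -/

section Walks

variable {V : Type} {G : WDigraph V}

/-- Real-valued total weight of a list of edges. -/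
def wt (G : WDigraph V) (l : List (V × V)) : ℝ := (l.map G.w).sum

lemma wt_nil : wt G [] = 0 := by simp [wt]

lemma wt_cons (e : V × V) (l : List (V × V)) : wt G (e :: l) = G.w e + wt G l := by
  simp [wt]

lemma wt_append (l₁ l₂ : List (V × V)) : wt G (l₁ ++ l₂) = wt G l₁ + wt G l₂ := by
  simp [wt]

lemma wt_nonneg (hG : G.Nonneg) (l : List (V × V)) : 0 ≤ wt G l := by
  induction l with
  | nil => simp [wt]
  | cons e l ih => rw [wt_cons]; have := hG e; linarith

lemma walk_append {u v x : V} {l₁ l₂ : List (V × V)} (h₁ : IsWalkFrom G u v l₁)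
    (h₂ : IsWalkFrom G v x l₂) : IsWalkFrom G u x (l₁ ++ l₂) := by
  induction l₁ generalizing u with
  | nil => obtain rfl : u = v := h₁; exact h₂
  | cons e l ih => exact ⟨h₁.1, h₁.2.1, ih h₁.2.2⟩

lemma walk_split {u x : V} {l₁ l₂ : List (V × V)} (h : IsWalkFrom G u x (l₁ ++ l₂)) :
    ∃ v, IsWalkFrom G u v l₁ ∧ IsWalkFrom G v x l₂ := by
  induction l₁ generalizing u with
  | nil => exact ⟨u, rfl, h⟩
  | cons e l ih =>
    obtain ⟨v, h1, h2⟩ := ih h.2.2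
    exact ⟨v, ⟨h.1, h.2.1, h1⟩, h2⟩

lemma walk_mem {u v : V} {l : List (V × V)} (h : IsWalkFrom G u v l) :
    ∀ e ∈ l, e ∈ G.edges := by
  induction l generalizing u with
  | nil => simp
  | cons e l ih =>
    intro e' he'
    rcases List.mem_cons.1 he' with rfl | h'
    · exact h.1
    · exact ih h.2.2 e' h'

/-- The reversed walk: reversed order, every edge flipped. -/
def rev (l : List (V × V)) : List (V × V) := (l.map Prod.swap).reverse

lemma rev_cons (e : V × V) (l : List (V × V)) : rev (e :: l) = rev l ++ [e.swap] := by
  simp [rev]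

lemma walk_rev (hs : G.Symmetric) {u v : V} {l : List (V × V)} (h : IsWalkFrom G u v l) :
    IsWalkFrom G v u (rev l) := by
  induction l generalizing u with
  | nil => exact Eq.symm h
  | cons e l ih =>
    rw [rev_cons]
    refine walk_append (ih h.2.2) ⟨(hs e h.1).1, rfl, h.2.1⟩

lemma wt_rev (hs : G.Symmetric) {l : List (V × V)} (h : ∀ e ∈ l, e ∈ G.edges) :
    wt G (rev l) = wt G l := by
  induction l with
  | nil => simp [rev]
  | cons e l ih =>
    rw [rev_cons, wt_append, wt_cons, wt_nil, wt_cons,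
      ih (fun e' he' => h e' (List.mem_cons_of_mem _ he'))]
    have h1 : G.w e.swap = G.w e := (hs e (h e List.mem_cons_self)).2
    rw [h1]; ring

/-- Cutting out cycles: every walk dominates one that leaves no vertex twice. -/
lemma walk_reduce (hG : G.Nonneg) {u v : V} {l : List (V × V)} (h : IsWalkFrom G u v l) :
    ∃ l', IsWalkFrom G u v l' ∧ wt G l' ≤ wt G l ∧ l'.length ≤ l.length ∧
      (l'.map Prod.fst).Nodup := by
  induction l generalizing u with
  | nil => exact ⟨[], h, le_rfl, le_rfl, by simp⟩
  | cons e l ih =>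
    obtain ⟨l', h1, h2, h3, h4⟩ := ih h.2.2
    have hw := hG e
    by_cases hu : u ∈ l'.map Prod.fst
    · obtain ⟨f, hf, hfu⟩ := List.mem_map.1 hu
      obtain ⟨a, b, rfl⟩ := List.append_of_mem hf
      obtain ⟨x, hx1, hx2⟩ := walk_split h1
      refine ⟨f :: b, ⟨hx2.1, hfu, hx2.2.2⟩, ?_, ?_, ?_⟩
      · rw [wt_append] at h2
        have := wt_nonneg hG a
        rw [wt_cons e]; linarith
      · simp at h3 ⊢; omega
      · rw [List.map_append] at h4
        exact (List.nodup_append.1 h4).2.1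
    · refine ⟨e :: l', ⟨h.1, h.2.1, h1⟩, ?_, by simpa using h3, ?_⟩
      · rw [wt_cons, wt_cons]; linarith
      · rw [List.map_cons, List.nodup_cons]
        exact ⟨by rw [h.2.1]; exact hu, h4⟩

/-- `l` is a shortest `u`-`v` walk, and among those it has the fewest edges. The tie-break
matters because zero weights are allowed. -/
def IsBest (G : WDigraph V) (u v : V) (l : List (V × V)) : Prop :=
  IsWalkFrom G u v l ∧ ∀ l', IsWalkFrom G u v l' →
    wt G l ≤ wt G l' ∧ (wt G l' = wt G l → l.length ≤ l'.length)

lemma exists_best [Fintype V] (hG : G.Nonneg) {u v : V} (h : G.Reachable u v) :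
    ∃ l, IsBest G u v l := by
  have hfin : ({l : List (V × V) | IsWalkFrom G u v l ∧ l.length ≤ Fintype.card V}).Finite :=
    (List.finite_length_le (V × V) (Fintype.card V)).subset (fun l hl => hl.2)
  have hred : ∀ l, IsWalkFrom G u v l → ∃ l', (IsWalkFrom G u v l' ∧
      l'.length ≤ Fintype.card V) ∧ wt G l' ≤ wt G l ∧ l'.length ≤ l.length := by
    intro l hl
    obtain ⟨l', h1, h2, h3, h4⟩ := walk_reduce hG hl
    refine ⟨l', ⟨h1, ?_⟩, h2, h3⟩
    simpa using h4.length_le_card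
  obtain ⟨l0, hl0⟩ := h
  obtain ⟨l1, hl1, -⟩ := hred l0 hl0
  obtain ⟨l, hl, hmin⟩ := Set.exists_min_image _
    (fun l => toLex (wt G l, l.length)) hfin ⟨l1, hl1⟩
  refine ⟨l, hl.1, fun l' hl' => ?_⟩
  obtain ⟨l'', h1, h2, h3⟩ := hred l' hl'
  have := hmin l'' h1
  rw [Prod.Lex.toLex_le_toLex] at this
  rcases this with h | ⟨h, h'⟩
  · exact ⟨by simp at h; linarith, fun h4 => by simp at h; linarith⟩
  · simp at h h'
    exact ⟨by linarith, fun h4 => by omega⟩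

lemma dist_le_of_walk {u v : V} {l : List (V × V)} (h : IsWalkFrom G u v l) :
    G.dist u v ≤ ENNReal.ofReal (wt G l) := iInf₂_le l h

lemma IsBest.dist_eq {u v : V} {l : List (V × V)} (h : IsBest G u v l) :
    G.dist u v = ENNReal.ofReal (wt G l) :=
  le_antisymm (dist_le_of_walk h.1)
    (le_iInf₂ fun _ hl' => ENNReal.ofReal_le_ofReal (h.2 _ hl').1)

lemma reachable_of_dist_lt {u v : V} (h : G.dist u v < ⊤) : G.Reachable u v := by
  by_contra hc
  refine h.ne (iInf₂_eq_top.2 fun l hl => (hc ⟨l, hl⟩).elim)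

/-- Finite distances are attained. -/
lemma exists_walk_of_dist_le [Fintype V] (hG : G.Nonneg) {u v : V} {a : ℝ} (ha : 0 ≤ a)
    (h : G.dist u v ≤ ENNReal.ofReal a) : ∃ l, IsWalkFrom G u v l ∧ wt G l ≤ a := by
  obtain ⟨l, hl⟩ := exists_best hG
    (reachable_of_dist_lt (lt_of_le_of_lt h ENNReal.ofReal_lt_top))
  rw [hl.dist_eq] at h
  exact ⟨l, hl.1, (ENNReal.ofReal_le_ofReal_iff ha).1 h⟩

lemma dist_self (u : V) : G.dist u u = 0 := by
  have : G.dist u u ≤ ENNReal.ofReal (wt G []) := dist_le_of_walk rfl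
  simpa [wt_nil] using this

lemma dist_comm (hs : G.Symmetric) (u v : V) : G.dist u v = G.dist v u := by
  have key : ∀ u v, G.dist u v ≤ G.dist v u := fun u v => le_iInf₂ fun l hl => by
    have := dist_le_of_walk (walk_rev hs hl)
    rwa [wt_rev hs (walk_mem hl)] at this
  exact le_antisymm (key _ _) (key _ _)

lemma dist_triangle (hG : G.Nonneg) (u v x : V) : G.dist u x ≤ G.dist u v + G.dist v x := by
  simp only [WDigraph.dist]
  rw [ENNReal.iInf₂_add]
  refine le_iInf₂ fun l hl => ?_
  rw [ENNReal.add_iInf₂]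
  refine le_iInf₂ fun l' hl' => ?_
  refine (dist_le_of_walk (walk_append hl hl')).trans ?_
  rw [wt_append, ENNReal.ofReal_add (wt_nonneg hG l) (wt_nonneg hG l')]
  exact le_rfl

end Walks

/-! ### Shortest-path trees of clusters -/

section Trees

variable {V : Type} {G : WDigraph V}

open Classical in
/-- A chosen shortest `u`-`v` walk with fewest edges (empty if `v` is unreachable). -/
noncomputable def best (G : WDigraph V) (u v : V) : List (V × V) :=
  if h : ∃ l, IsBest G u v l then h.choose else []

lemma best_spec [Fintype V] (hG : G.Nonneg) {u v : V} (h : G.Reachable u v) :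
    IsBest G u v (best G u v) := by
  have h' := exists_best hG h
  rw [best, dif_pos h']
  exact h'.choose_spec

/-- First edge of the chosen shortest walk from `u` to `v`; for fixed `v` these edges form a
shortest-path tree rooted at `v`. The value is irrelevant when the walk is empty. -/
noncomputable def nx (G : WDigraph V) (v u : V) : V × V := (best G u v).head?.getD (u, v)

/-- If `C` is closed under moving along shortest walks to `v`, and `E` contains the tree edge of
every vertex of `C`, then `E` contains a shortest walk to `v` from every vertex of `C`. The tree
does not cycle on zero-weight edges because the number of edges of `best` decreases. -/
lemma tree_walk [Fintype V] (hG : G.Nonneg) (v : V) (C : V → Prop) (E : Finset (V × V))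
    (hE : ∀ u, C u → nx G v u ∈ G.edges → nx G v u ∈ E)
    (hC : ∀ e ∈ G.edges, C e.1 → G.dist e.1 v = ENNReal.ofReal (G.w e) + G.dist e.2 v → C e.2)
    (u : V) (hu : C u) (hr : G.Reachable u v) :
    ∃ l, IsWalkFrom G u v l ∧ wt G l = wt G (best G u v) ∧ ∀ e ∈ l, e ∈ E := by
  induction hn : (best G u v).length using Nat.strong_induction_on generalizing u with
  | _ n ih =>
    have hb := best_spec hG hr
    rcases hl : best G u v with _ | ⟨e, l⟩
    · rw [hl] at hb
      exact ⟨[], hb.1, rfl, by simp⟩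
    · have hnx : nx G v u = e := by simp [nx, hl]
      rw [hl] at hb
      obtain ⟨he, rfl, hw⟩ := hb.1
      have hr2 : G.Reachable e.2 v := ⟨l, hw⟩
      have hb2 := best_spec hG hr2
      have h1 := hb2.2 l hw
      have h2 := (hb.2 (e :: best G e.2 v) ⟨he, rfl, hb2.1⟩).1
      rw [wt_cons, wt_cons] at h2
      have heq : wt G l = wt G (best G e.2 v) := by linarith [h1.1]
      have hlen := h1.2 heq
      have hC2 : C e.2 := by
        refine hC e he hu ?_
        rw [hb.dist_eq, hb2.dist_eq, wt_cons, heq,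
          ENNReal.ofReal_add (hG e) (wt_nonneg hG _)]
      obtain ⟨l', hl'1, hl'2, hl'3⟩ := ih _ (by
        rw [hl] at hn; simp at hn; omega) e.2 hC2 hr2 rfl
      refine ⟨e :: l', ⟨he, rfl, hl'1⟩, ?_, ?_⟩
      · rw [wt_cons, wt_cons, hl'2, heq]
      · intro f hf
        rcases List.mem_cons.1 hf with rfl | hf
        · have := hE _ hu (by rw [hnx]; exact he)
          rwa [hnx] at this
        · exact hl'3 f hf

end Trees

/-! ### Sampled hierarchies and bunches -/

section Hierarchy

variable {V : Type}

/-- Greedy hitting: `r` greedily chosen points of `X` leave at most a `(1 - t/|X|)^r` fraction of a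
family of subsets of size at least `t` unhit. -/
lemma exists_hitting [DecidableEq V] (X : Finset V) (F : Finset (Finset V)) (t : ℝ)
    (hF : ∀ s ∈ F, s ⊆ X ∧ t ≤ s.card) (hX : 0 < X.card) (htX : t ≤ X.card) (r : ℕ) :
    ∃ Y ⊆ X, Y.card ≤ r ∧
      ((F.filter (fun s => Disjoint s Y)).card : ℝ) ≤ (1 - t / X.card) ^ r * F.card := by
  induction r with
  | zero => exact ⟨∅, by simp, by simp, by simp⟩
  | succ r ih =>
    obtain ⟨Y, hYX, hYr, hY⟩ := ih
    set F' := F.filter (fun s => Disjoint s Y) with hF'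
    have hXr : (0 : ℝ) < X.card := by exact_mod_cast hX
    have hdc : ∑ x ∈ X, ((F'.filter (fun s => x ∈ s)).card : ℝ) =
        ∑ s ∈ F', (s.card : ℝ) := by
      have h := Finset.sum_card_bipartiteAbove_eq_sum_card_bipartiteBelow
        (s := X) (t := F') (fun x s => x ∈ s)
      have h2 : ∀ s ∈ F', (Finset.bipartiteBelow (fun x s => x ∈ s) X s).card = s.card := by
        intro s hs
        congr 1
        ext x
        simp only [Finset.mem_bipartiteBelow]
        exact ⟨fun h => h.2, fun h => ⟨(hF s (Finset.mem_filter.1 hs).1).1 h, h⟩⟩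
      rw [Finset.sum_congr rfl h2] at h
      exact_mod_cast h
    have hlow : t * F'.card ≤ ∑ s ∈ F', (s.card : ℝ) := by
      rw [mul_comm, ← nsmul_eq_mul]
      exact Finset.card_nsmul_le_sum _ _ _
        (fun s hs => (hF s (Finset.mem_filter.1 hs).1).2)
    obtain ⟨x, hx, hdeg⟩ : ∃ x ∈ X, t * F'.card / X.card ≤
        ((F'.filter (fun s => x ∈ s)).card : ℝ) := by
      refine Finset.exists_le_of_sum_le (Finset.card_pos.1 hX) ?_
      rw [hdc, Finset.sum_const, nsmul_eq_mul, mul_div_cancel₀ _ hXr.ne']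
      exact hlow
    refine ⟨insert x Y, Finset.insert_subset hx hYX,
      (Finset.card_insert_le _ _).trans (by omega), ?_⟩
    have hsplit := Finset.card_filter_add_card_filter_not (s := F') (fun s => x ∈ s)
    have heq : F.filter (fun s => Disjoint s (insert x Y)) =
        F'.filter (fun s => ¬ x ∈ s) := by
      ext s
      simp only [hF', Finset.mem_filter, Finset.disjoint_insert_right]
      tauto
    rw [heq]
    have hsplit' : ((F'.filter (fun s => x ∈ s)).card : ℝ) +
        ((F'.filter (fun s => ¬ x ∈ s)).card : ℝ) = F'.card := by exact_mod_cast hsplit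
    have h1 : 0 ≤ 1 - t / X.card := by
      rw [sub_nonneg, div_le_one hXr]; exact htX
    calc ((F'.filter (fun s => ¬ x ∈ s)).card : ℝ)
        ≤ (1 - t / X.card) * F'.card := by
          rw [← hsplit'] at hdeg ⊢
          have : t * (((F'.filter (fun s => x ∈ s)).card : ℝ) +
            ((F'.filter (fun s => ¬ x ∈ s)).card : ℝ)) / X.card = t / X.card *
            (((F'.filter (fun s => x ∈ s)).card : ℝ) +
            ((F'.filter (fun s => ¬ x ∈ s)).card : ℝ)) := by ring
          rw [this] at hdeg
          linarith
      _ ≤ (1 - t / X.card) * ((1 - t / X.card) ^ r * F.card) :=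
          mul_le_mul_of_nonneg_left hY h1
      _ = _ := by ring

/-- One sampling step, derandomized. It suffices that `Y` hits every ball of `X` with at least `t`
points, of which there are at most `|V|²`. -/
lemma exists_level [DecidableEq V] [Fintype V] (d : V → V → ℝ≥0∞) (X : Finset V)
    (t : ℝ) (ht : 0 < t) :
    ∃ Y ⊆ X, (Y.card : ℝ) * t ≤ X.card * (2 * Real.log (Fintype.card V) + 1) ∧
      ∀ u, ((X.filter (fun v => ∀ b ∈ Y, d u v < d u b)).card : ℝ) < t := by
  by_cases htX : t ≤ X.card
  swap
  · refine ⟨∅, by simp, ?_, fun u => ?_⟩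
    · have : 0 ≤ Real.log (Fintype.card V) := Real.log_natCast_nonneg _
      simp only [Finset.card_empty, Nat.cast_zero, zero_mul]
      positivity
    · simpa using htX
  have hXr : (0 : ℝ) < X.card := ht.trans_le htX
  have hX : 0 < X.card := by exact_mod_cast hXr
  have hV : 0 < Fintype.card V := hX.trans_le (Finset.card_le_univ X)
  have hVr : (0 : ℝ) < Fintype.card V := by exact_mod_cast hV
  have hlog : 0 ≤ Real.log (Fintype.card V) := Real.log_natCast_nonneg _
  let ball : V × V → Finset V := fun p => X.filter (fun v => d p.1 v ≤ d p.1 p.2)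
  let F : Finset (Finset V) := (Finset.univ.image ball).filter (fun s => t ≤ s.card)
  have hFc : (F.card : ℝ) ≤ (Fintype.card V : ℝ) ^ 2 := by
    have : F.card ≤ Fintype.card V ^ 2 := by
      refine (Finset.card_filter_le _ _).trans (Finset.card_image_le.trans ?_)
      rw [Finset.card_univ, Fintype.card_prod, sq]
    exact_mod_cast this
  set r : ℕ := ⌊X.card * (2 * Real.log (Fintype.card V)) / t⌋₊ + 1 with hr
  obtain ⟨Y, hYX, hYr, hY⟩ := exists_hitting X F t (by
    intro s hs
    obtain ⟨h1, h2⟩ := Finset.mem_filter.1 hs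
    obtain ⟨p, -, rfl⟩ := Finset.mem_image.1 h1
    exact ⟨Finset.filter_subset _ _, h2⟩) hX htX r
  have hrlow : X.card * (2 * Real.log (Fintype.card V)) / t < r := by
    rw [hr]; push_cast; exact Nat.lt_floor_add_one _
  have hrup : (r : ℝ) ≤ X.card * (2 * Real.log (Fintype.card V)) / t + 1 := by
    rw [hr]; push_cast
    have := Nat.floor_le (a := X.card * (2 * Real.log (Fintype.card V)) / t) (by positivity)
    linarith
  have hempty : F.filter (fun s => Disjoint s Y) = ∅ := by
    rw [← Finset.card_eq_zero]
    have hlt : ((F.filter (fun s => Disjoint s Y)).card : ℝ) < 1 := by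
      refine hY.trans_lt ?_
      have h1 : 0 ≤ 1 - t / X.card := by
        rw [sub_nonneg, div_le_one hXr]; exact htX
      have h2 : 1 - t / X.card ≤ Real.exp (-(t / X.card)) := by
        have := Real.add_one_le_exp (-(t / X.card)); linarith
      have h3 : (1 - t / X.card) ^ r ≤ Real.exp (-(r * (t / X.card))) := by
        refine (pow_le_pow_left₀ h1 h2 r).trans (le_of_eq ?_)
        rw [← Real.exp_nat_mul]; congr 1; ring
      have h4 : 2 * Real.log (Fintype.card V) < r * (t / X.card) := by
        rw [div_lt_iff₀ ht] at hrlow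
        rw [← mul_div_assoc, lt_div_iff₀ hXr]; linarith
      have h5 : (Fintype.card V : ℝ) ^ 2 = Real.exp (2 * Real.log (Fintype.card V)) := by
        rw [two_mul, Real.exp_add, Real.exp_log hVr, sq]
      calc (1 - t / X.card) ^ r * F.card
          ≤ Real.exp (-(r * (t / X.card))) * Real.exp (2 * Real.log (Fintype.card V)) := by
            rw [← h5]
            exact mul_le_mul h3 hFc (by positivity) (Real.exp_nonneg _)
        _ < 1 := by
            rw [← Real.exp_add, Real.exp_lt_one_iff]; linarith
    have : (F.filter (fun s => Disjoint s Y)).card < 1 := by exact_mod_cast hlt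
    omega
  refine ⟨Y, hYX, ?_, fun u => ?_⟩
  · have h1 : (Y.card : ℝ) ≤ r := by exact_mod_cast hYr
    have h2 := h1.trans hrup
    have h3 : (Y.card : ℝ) * t ≤ X.card * (2 * Real.log (Fintype.card V)) + t := by
      calc (Y.card : ℝ) * t ≤ (X.card * (2 * Real.log (Fintype.card V)) / t + 1) * t :=
            mul_le_mul_of_nonneg_right h2 ht.le
        _ = _ := by field_simp
    linarith
  · by_contra hcon
    push Not at hcon
    set B := X.filter (fun v => ∀ b ∈ Y, d u v < d u b) with hB
    have hBne : B.Nonempty := by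
      rw [← Finset.card_pos]
      have := ht.trans_le hcon
      exact_mod_cast this
    -- The farthest bunch member spans a ball containing the bunch, so `Y` hits that ball.
    obtain ⟨v, hv, hmax⟩ := Finset.exists_max_image B (d u) hBne
    have hsub : B ⊆ ball (u, v) := fun x hx =>
      Finset.mem_filter.2 ⟨(Finset.mem_filter.1 hx).1, hmax x hx⟩
    have hmem : ball (u, v) ∈ F := by
      refine Finset.mem_filter.2 ⟨Finset.mem_image_of_mem _ (Finset.mem_univ _), hcon.trans ?_⟩
      exact_mod_cast Finset.card_le_card hsub
    have hnd : ¬ Disjoint (ball (u, v)) Y := fun h => by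
      have : ball (u, v) ∈ F.filter (fun s => Disjoint s Y) := Finset.mem_filter.2 ⟨hmem, h⟩
      rw [hempty] at this
      simp at this
    obtain ⟨a, ha1, ha2⟩ := Finset.not_disjoint_iff.1 hnd
    have h1 : d u a ≤ d u v := (Finset.mem_filter.1 ha1).2
    exact absurd ((Finset.mem_filter.1 hv).2 a ha2) (not_lt.2 h1)

/-- `v` is in the level-`i` bunch of `u`: it lies in `A i` and is strictly closer to `u` than
every vertex of `A (i + 1)`. -/
def Bun (d : V → V → ℝ≥0∞) (A : ℕ → Finset V) (i : ℕ) (u v : V) : Prop :=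
  v ∈ A i ∧ ∀ b ∈ A (i + 1), d u v < d u b

open Classical in
/-- The level-`i` bunch of `u` as a finset. -/
noncomputable def bun (d : V → V → ℝ≥0∞) (A : ℕ → Finset V) (i : ℕ) (u : V) : Finset V :=
  (A i).filter (fun v => ∀ b ∈ A (i + 1), d u v < d u b)

lemma mem_bun {d : V → V → ℝ≥0∞} {A : ℕ → Finset V} {i : ℕ} {u v : V} :
    v ∈ bun d A i u ↔ Bun d A i u v := by simp [bun, Bun]

/-- A decreasing hierarchy with bunches of size below `t` at every level, whose `K`-th level is
empty as soon as `t` beats the logarithmic factor by enough. -/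
lemma exists_hierarchy [DecidableEq V] [Fintype V] (d : V → V → ℝ≥0∞) (X : Finset V)
    (t : ℝ) (ht : 0 < t) (K : ℕ) (hK : X.card * ((2 * Real.log (Fintype.card V) + 1) / t) ^ K < 1) :
    ∃ A : ℕ → Finset V, A 0 = X ∧ (∀ i, A (i + 1) ⊆ A i) ∧ A K = ∅ ∧
      ∀ i u, ((bun d A i u).card : ℝ) < t := by
  choose Y hYX hYc hYb using fun X => exists_level d X t ht
  let A : ℕ → Finset V := fun i => Y^[i] X
  have hA : ∀ i, A (i + 1) = Y (A i) := fun i => Function.iterate_succ_apply' Y i X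
  have hc : 0 ≤ 2 * Real.log (Fintype.card V) + 1 := by
    have : 0 ≤ Real.log (Fintype.card V) := Real.log_natCast_nonneg _
    positivity
  have hcard : ∀ i, ((A i).card : ℝ) ≤
      X.card * ((2 * Real.log (Fintype.card V) + 1) / t) ^ i := by
    intro i
    induction i with
    | zero => simp [A]
    | succ i ih =>
      have h1 := hYc (A i)
      rw [← hA, ← le_div_iff₀ ht] at h1
      calc ((A (i + 1)).card : ℝ) ≤ _ := h1
        _ = (A i).card * ((2 * Real.log (Fintype.card V) + 1) / t) := by ring
        _ ≤ _ := mul_le_mul_of_nonneg_right ih (by positivity)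
        _ = _ := by ring
  refine ⟨A, rfl, fun i => hA i ▸ hYX _, ?_, fun i u => ?_⟩
  · have : ((A K).card : ℝ) < 1 := (hcard K).trans_lt hK
    rw [← Finset.card_eq_zero]
    have : (A K).card < 1 := by exact_mod_cast this
    omega
  · have h := hYb (A i) u
    rw [← hA] at h
    convert h using 3
    rw [bun]
    congr

/-- If some vertex of `A j` is within `a` of `u`, then so is one lying in a bunch of `u` at level
at least `j`: climb until the next level is farther away. -/
lemma exists_bun_near {d : V → V → ℝ≥0∞} {A : ℕ → Finset V} {K : ℕ}
    (hA : ∀ i, A (i + 1) ⊆ A i) (hK : A K = ∅) {u : V} {a : ℝ≥0∞} (j : ℕ) (y : V)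
    (hy : y ∈ A j) (hd : d u y ≤ a) :
    ∃ z ∈ A j, (∃ i < K, Bun d A i u z) ∧ d u z ≤ a := by
  have hmono : Antitone A := antitone_nat_of_succ_le hA
  have hjK : j < K := by
    by_contra h
    have := hmono (not_lt.1 h) hy
    rw [hK] at this
    simp at this
  induction hn : K - j generalizing j y with
  | zero => omega
  | succ n ih =>
    by_cases hb : ∀ b ∈ A (j + 1), d u y < d u b
    · exact ⟨y, hy, ⟨j, hjK, hy, hb⟩, hd⟩
    · push Not at hb
      obtain ⟨b, hbA, hb⟩ := hb
      have hj1 : j + 1 < K := by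
        by_contra h
        have := hmono (not_lt.1 h) hbA
        rw [hK] at this
        simp at this
      obtain ⟨z, hz, h1, h2⟩ := ih (j + 1) b hbA (hb.trans hd) hj1 (by omega)
      exact ⟨z, hA j hz, h1, h2⟩

/-- The Thorup–Zwick argument: a point `x` of `A 0` and any point `y` have a common bunch member
`z`, and the detour through `z` costs at most `2K - 1` times their distance. -/
lemma exists_pivot {d : V → V → ℝ≥0∞} (hd0 : ∀ x, d x x = 0) (hdc : ∀ x y, d x y = d y x)
    (hdt : ∀ x y z, d x z ≤ d x y + d y z) {A : ℕ → Finset V} {K : ℕ}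
    (hA : ∀ i, A (i + 1) ⊆ A i) (hK : A K = ∅) (x y : V) (hx : x ∈ A 0) :
    ∃ z, (∃ i < K, Bun d A i x z) ∧ (∃ i < K, Bun d A i y z) ∧
      d x z + d y z ≤ (2 * K - 1 : ℕ) * d x y := by
  have hmono : Antitone A := antitone_nat_of_succ_le hA
  have hlt : ∀ j y, y ∈ A j → j < K := by
    intro j y hy
    by_contra h
    have := hmono (not_lt.1 h) hy
    rw [hK] at this
    simp at this
  have main : ∀ n j x y w, K - j = n → w ∈ A j → (∃ i < K, Bun d A i x w) →
      d x w ≤ j * d x y → ∃ z, (∃ i < K, Bun d A i x z) ∧ (∃ i < K, Bun d A i y z) ∧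
      d x z + d y z ≤ (2 * K - 1 : ℕ) * d x y := by
    intro n
    induction n with
    | zero =>
      intro j x y w hn hw
      have := hlt j w hw
      omega
    | succ n ih =>
      intro j x y w hn hw hxw hd
      have hjK := hlt j w hw
      have hyw : d y w ≤ (j + 1 : ℕ) * d x y := by
        calc d y w ≤ d y x + d x w := hdt _ _ _
          _ ≤ d x y + j * d x y := by rw [hdc y x]; gcongr
          _ = _ := by push_cast; ring
      by_cases hb : ∀ b ∈ A (j + 1), d y w < d y b
      · refine ⟨w, hxw, ⟨j, hjK, hw, hb⟩, ?_⟩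
        calc d x w + d y w ≤ j * d x y + (j + 1 : ℕ) * d x y := add_le_add hd hyw
          _ = (2 * j + 1 : ℕ) * d x y := by push_cast; ring
          _ ≤ _ := by gcongr; omega
      · push Not at hb
        obtain ⟨b, hbA, hb⟩ := hb
        obtain ⟨w', hw', h1, h2⟩ := exists_bun_near hA hK (j + 1) b hbA (hb.trans hyw)
        obtain ⟨z, hz1, hz2, hz3⟩ := ih (j + 1) y x w' (by omega) hw' h1 (by rwa [hdc y x])
        refine ⟨z, hz2, hz1, ?_⟩
        rw [add_comm, hdc x y]; exact hz3
  obtain ⟨w, hw, h1, h2⟩ := exists_bun_near hA hK 0 x hx (hd0 x).le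
  exact main _ 0 x y w rfl hw h1 (by simpa using h2)

end Hierarchy

/-! ### Walks with few edges outside a subgraph -/

section Missing

variable {V : Type} {G : WDigraph V}

/-- Cutting a walk at the edge on which its weight first exceeds `L`. -/
lemma greedy_split {L : ℝ} (l : List (V × V)) (hL : 0 ≤ L) (h : L < wt G l) :
    ∃ s e t, l = s ++ e :: t ∧ wt G s ≤ L ∧ L < wt G s + G.w e := by
  induction l generalizing L with
  | nil => rw [wt_nil] at h; linarith
  | cons e l ih =>
    by_cases he : L < G.w e
    · exact ⟨[], e, l, rfl, by rwa [wt_nil], by rwa [wt_nil, zero_add]⟩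
    · rw [wt_cons] at h
      obtain ⟨s, f, t, rfl, h1, h2⟩ := ih (L := L - G.w e) (by linarith) (by linarith)
      exact ⟨e :: s, f, t, rfl, by rw [wt_cons]; linarith, by rw [wt_cons]; linarith⟩

variable [DecidableEq V] {E : Finset (V × V)}

/-- Some `x`-`y` walk has weight at most `a` and at most `r` edges outside `E`. -/
def MW (G : WDigraph V) (E : Finset (V × V)) (r : ℕ) (a : ℝ) (x y : V) : Prop :=
  ∃ l, IsWalkFrom G x y l ∧ wt G l ≤ a ∧ l.countP (fun e => decide (e ∉ E)) ≤ r

lemma MW.mono {r s : ℕ} {a b : ℝ} {x y : V} (h : MW G E r a x y) (hr : r ≤ s) (ha : a ≤ b) :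
    MW G E s b x y := by
  obtain ⟨l, h1, h2, h3⟩ := h
  exact ⟨l, h1, h2.trans ha, h3.trans hr⟩

lemma MW.trans {r s : ℕ} {a b : ℝ} {x y z : V} (h : MW G E r a x y) (h' : MW G E s b y z) :
    MW G E (r + s) (a + b) x z := by
  obtain ⟨l, h1, h2, h3⟩ := h
  obtain ⟨l', h1', h2', h3'⟩ := h'
  refine ⟨l ++ l', walk_append h1 h1', ?_, ?_⟩
  · rw [wt_append]; linarith
  · rw [List.countP_append]; omega

lemma MW.symm (hs : G.Symmetric) (hE : ∀ e ∈ E, e.swap ∈ E) {r : ℕ} {a : ℝ} {x y : V}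
    (h : MW G E r a x y) : MW G E r a y x := by
  obtain ⟨l, h1, h2, h3⟩ := h
  refine ⟨rev l, walk_rev hs h1, by rwa [wt_rev hs (walk_mem h1)], ?_⟩
  refine le_trans (le_of_eq ?_) h3
  rw [rev, List.countP_reverse, List.countP_map]
  congr 1
  ext e
  have : e.swap ∈ E ↔ e ∈ E := ⟨fun h => by simpa using hE _ h, hE e⟩
  simp [Function.comp, this]

lemma MW.edge {e : V × V} (he : e ∈ G.edges) : MW G E 1 (G.w e) e.1 e.2 :=
  ⟨[e], ⟨he, rfl, rfl⟩, by simp [wt], List.countP_le_length⟩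

/-- Suppose every walk can either be replaced by a good one, or its start is near `Z`. Cutting a
walk of weight at most `mL` into `m + 1` pieces of weight at most `L` joined by single edges,
either the whole walk can be replaced, or it can be up to some vertex `u` near `Z`. -/
lemma initial_or_near (hG : G.Nonneg) {Z : V → Prop} {h : ℕ} {c L : ℝ} (hc : 0 ≤ c) (hL : 0 ≤ L)
    (H : ∀ x y l, IsWalkFrom G x y l → MW G E h ((1 + c) * wt G l) x y ∨
      ∃ z, Z z ∧ MW G E h (2 * wt G l) x z)
    (m : ℕ) (x y : V) (l : List (V × V)) (hl : IsWalkFrom G x y l) (hm : wt G l ≤ m * L) :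
    MW G E ((m + 1) * (h + 1)) ((1 + c) * wt G l) x y ∨
      ∃ l₁ l₂ u z, l = l₁ ++ l₂ ∧ IsWalkFrom G x u l₁ ∧ IsWalkFrom G u y l₂ ∧
        MW G E ((m + 1) * (h + 1)) ((1 + c) * wt G l₁) x u ∧ Z z ∧ MW G E h (2 * L) u z := by
  have hnil : ∀ (x : V) (r : ℕ), MW G E r ((1 + c) * wt G []) x x := fun x r =>
    ⟨[], rfl, by simp [wt_nil], by simp⟩
  have hshort : ∀ (m : ℕ) (x y : V) (l : List (V × V)), IsWalkFrom G x y l → wt G l ≤ L →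
      MW G E ((m + 1) * (h + 1)) ((1 + c) * wt G l) x y ∨
      ∃ l₁ l₂ u z, l = l₁ ++ l₂ ∧ IsWalkFrom G x u l₁ ∧ IsWalkFrom G u y l₂ ∧
        MW G E ((m + 1) * (h + 1)) ((1 + c) * wt G l₁) x u ∧ Z z ∧
        MW G E h (2 * L) u z := by
    intro m x y l hl hlL
    rcases H x y l hl with h1 | ⟨z, hz, h1⟩
    · exact Or.inl (h1.mono (by nlinarith) le_rfl)
    · exact Or.inr ⟨[], l, x, z, rfl, rfl, hl, hnil _ _, hz, h1.mono le_rfl (by linarith)⟩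
  induction m generalizing x l with
  | zero => exact hshort 0 x y l hl (by simp at hm; linarith)
  | succ m ih =>
    by_cases hlL : wt G l ≤ L
    · exact hshort (m + 1) x y l hl hlL
    obtain ⟨s, e, t, rfl, h1, h2⟩ := greedy_split l hL (not_le.1 hlL)
    obtain ⟨v, hxv, hvy⟩ := walk_split hl
    have hve : e.1 = v := hvy.2.1
    have hwt : wt G (s ++ e :: t) = wt G s + G.w e + wt G t := by
      rw [wt_append, wt_cons]; ring
    have hwe := hG e
    rcases H x v s hxv with h3 | ⟨z, hz, h3⟩
    · have hpre : MW G E (h + 1) ((1 + c) * (wt G s + G.w e)) x e.2 := by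
        have h4 : MW G E 1 (G.w e) v e.2 := hve ▸ MW.edge hvy.1
        exact (h3.trans h4).mono le_rfl (by nlinarith)
      rcases ih e.2 t hvy.2.2 (by rw [hwt] at hm; push_cast at hm; linarith) with
        h4 | ⟨l₁, l₂, u, z, rfl, h4, h5, h6, h7, h8⟩
      · refine Or.inl ((hpre.trans h4).mono (le_of_eq (by ring)) (le_of_eq ?_))
        rw [hwt]; ring
      · refine Or.inr ⟨s ++ e :: l₁, l₂, u, z, by simp, ?_, h5, ?_, h7, h8⟩
        · exact walk_append hxv ⟨hvy.1, hvy.2.1, h4⟩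
        · refine (hpre.trans h6).mono (le_of_eq (by ring)) (le_of_eq ?_)
          rw [wt_append, wt_cons]; ring
    · exact Or.inr ⟨[], _, x, z, rfl, rfl, hl, hnil _ _, hz, h3.mono le_rfl (by linarith)⟩

/-- The number of missing edges allowed at level `i`, when walks are cut into about `m` pieces. -/
def hops (m : ℕ) : ℕ → ℕ
  | 0 => 0
  | i + 1 => 2 * ((m + 1) * (hops m i + 1)) + 2 * hops m i

/-- Every walk of weight `W` can be replaced by one of weight `(1 + 8i/m) W` with boundedly many
missing edges, unless its start is within `2W` of `A (i + 1)` up to boundedly many missing edges.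
In the inductive step let `u` and `v` be the first and the last vertex where the replacement of
short pieces fails, with nearby `z, z' ∈ A (i + 1)`: either the bunch of `z` provides the
shortcut from `z` to `z'`, or `z`, and hence the start, is near `A (i + 2)`. -/
lemma replace_or_near [Fintype V] (hs : G.Symmetric) (hG : G.Nonneg) {A : ℕ → Finset V} {K : ℕ}
    (hA0 : A 0 = Finset.univ) (hA : ∀ i, A (i + 1) ⊆ A i) (hK : A K = ∅)
    (hEs : ∀ e ∈ E, e.swap ∈ E)
    (hE : ∀ x y a, 0 ≤ a → (∃ i < K, Bun G.dist A i x y) → G.dist x y ≤ ENNReal.ofReal a →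
      MW G E 0 a x y)
    (m : ℕ) (i : ℕ) (hi : i < K) (him : 8 * (i + 1) ≤ m) (x y : V) (l : List (V × V))
    (hl : IsWalkFrom G x y l) :
    MW G E (hops m i) ((1 + 8 * i / m) * wt G l) x y ∨
      ∃ z, z ∈ A (i + 1) ∧ MW G E (hops m i) (2 * wt G l) x z := by
  have bunch : ∀ (j : ℕ) (x y : V) (a : ℝ), j < K → 0 ≤ a → y ∈ A j →
      G.dist x y ≤ ENNReal.ofReal a →
      MW G E 0 a x y ∨ ∃ z, z ∈ A (j + 1) ∧ MW G E 0 a x z := by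
    intro j x y a hj ha hy hd
    by_cases hb : ∀ b ∈ A (j + 1), G.dist x y < G.dist x b
    · exact Or.inl (hE x y a ha ⟨j, hj, hy, hb⟩ hd)
    · push Not at hb
      obtain ⟨b, hbA, hb⟩ := hb
      obtain ⟨z, hz, h1, h2⟩ := exists_bun_near hA hK (j + 1) b hbA (hb.trans hd)
      exact Or.inr ⟨z, hz, hE x z a ha h1 h2⟩
  induction i generalizing x y l with
  | zero =>
    have hw := wt_nonneg hG l
    rcases bunch 0 x y (wt G l) hi hw (by simp [hA0]) (dist_le_of_walk hl) with h | ⟨z, hz, h⟩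
    · exact Or.inl (h.mono le_rfl (by simp))
    · exact Or.inr ⟨z, hz, h.mono le_rfl (by linarith)⟩
  | succ i ih =>
    have hm0 : (0 : ℝ) < m := by
      have : 0 < m := by omega
      exact_mod_cast this
    have him' : 8 * ((i : ℝ) + 1 + 1) ≤ m := by exact_mod_cast him
    set W := wt G l with hW
    have hW0 : 0 ≤ W := wt_nonneg hG l
    set c : ℝ := 8 * i / m with hc
    have hc0 : 0 ≤ c := by positivity
    set L : ℝ := W / m with hL
    have hL0 : 0 ≤ L := by positivity
    have hmL : W = m * L := by rw [hL]; field_simp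
    have hcW : c * W = 8 * i * L := by rw [hc, hL]; ring
    have hcW' : 8 * ((i + 1 : ℕ) : ℝ) / m * W = 8 * i * L + 8 * L := by
      rw [hL]; push_cast; ring
    have hbig : 8 * i * L + 6 * L ≤ W := by
      rw [hmL]; nlinarith
    have H := fun x y l => ih (by omega) (by omega) x y l
    have P := initial_or_near hG (E := E) hc0 hL0 H m
    set N := (m + 1) * (hops m i + 1) with hN
    have hops1 : hops m (i + 1) = 2 * N + 2 * hops m i := rfl
    rcases P x y l hl hmL.le with h1 | ⟨l₁, l₂, u, z, rfl, hxu, huy, h2, hz, h3⟩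
    · refine Or.inl (h1.mono (by omega) ?_)
      rw [one_add_mul, one_add_mul, hcW, hcW']; linarith
    have hW12 : W = wt G l₁ + wt G l₂ := by rw [hW, wt_append]
    have hw1 := wt_nonneg hG l₁
    have hrev : wt G (rev l₂) = wt G l₂ := wt_rev hs (walk_mem huy)
    rcases P y u (rev l₂) (walk_rev hs huy) (by rw [hrev]; linarith) with
      h4 | ⟨l₃, l₄, v, z', h34, hyv, hvu, h5, hz', h6⟩
    · refine Or.inl ((h2.trans (h4.symm hs hEs)).mono (by omega) ?_)
      rw [hrev, ← mul_add, ← hW12, one_add_mul, one_add_mul, hcW, hcW']; linarith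
    have hW34 : wt G l₂ = wt G l₃ + wt G l₄ := by rw [← hrev, h34, wt_append]
    have hw3 := wt_nonneg hG l₃
    have hw4 := wt_nonneg hG l₄
    have hzz : G.dist z z' ≤ ENNReal.ofReal (4 * L + wt G l₄) := by
      have huv : MW G E l₄.length (wt G l₄) v u := ⟨l₄, hvu, le_rfl, List.countP_le_length⟩
      obtain ⟨p, hp, hpw, -⟩ :=
        ((h3.symm hs hEs).trans (huv.symm hs hEs)).trans h6
      exact (dist_le_of_walk hp).trans (ENNReal.ofReal_le_ofReal (by linarith))
    have hcs : c * wt G l₁ + c * wt G l₃ + c * wt G l₄ = 8 * i * L := by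
      rw [← hcW, hW12, hW34]; ring
    have hc3 : 0 ≤ c * wt G l₃ := by positivity
    have hc4 : 0 ≤ c * wt G l₄ := by positivity
    rcases bunch (i + 1) z z' (4 * L + wt G l₄) hi (by positivity) hz' hzz with
      h7 | ⟨b, hb, h7⟩
    · refine Or.inl (((((h2.trans h3).trans h7).trans (h6.symm hs hEs)).trans
        (h5.symm hs hEs)).mono (by omega) ?_)
      have hgoal : (1 + 8 * ((i + 1 : ℕ) : ℝ) / m) * W = W + (8 * i * L + 8 * L) := by
        rw [one_add_mul, hcW']
      rw [hgoal]; linarith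
    · refine Or.inr ⟨b, hb, ((h2.trans h3).trans h7).mono (by omega) ?_⟩
      linarith

/-- Since `A K` is empty, the second alternative of `replace_or_near` is void at level `K - 1`; so
the union `E` of the shortest-path trees of all clusters (a cluster being the set of vertices with a
given vertex in their bunch) is a `β`-missing `(1 + 8K/m)`-spanner with `β = hops m (K - 1)`. -/
lemma exists_missing_spanner [Fintype V] (hs : G.Symmetric) (hG : G.Nonneg) (m K : ℕ)
    (hK1 : 1 ≤ K) (hKm : 8 * K ≤ m) (t : ℝ) (ht : 0 < t)
    (hK : (Fintype.card V) * ((2 * Real.log (Fintype.card V) + 1) / t) ^ K < 1) :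
    ∃ E ⊆ G.edges, (∀ e ∈ E, e.swap ∈ E) ∧
      (E.card : ℝ) ≤ 2 * (K * (Fintype.card V * t)) ∧
      ∀ x y l, IsWalkFrom G x y l →
        MW G E (hops m (K - 1)) ((1 + 8 * K / m) * wt G l) x y := by
  obtain ⟨A, hA0, hA, hAK, hb⟩ := exists_hierarchy G.dist Finset.univ t ht K
    (by rw [Finset.card_univ]; exact hK)
  let E₀ : Finset (V × V) := ((Finset.range K).biUnion fun i =>
    Finset.univ.biUnion fun u => (bun G.dist A i u).image fun v => nx G v u).filter (· ∈ G.edges)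
  have hmemE₀ : ∀ i < K, ∀ u v, Bun G.dist A i u v → nx G v u ∈ G.edges → nx G v u ∈ E₀ := by
    intro i hi u v hB he
    refine Finset.mem_filter.2 ⟨Finset.mem_biUnion.2 ⟨i, Finset.mem_range.2 hi,
      Finset.mem_biUnion.2 ⟨u, Finset.mem_univ _, Finset.mem_image.2 ⟨v, mem_bun.2 hB, rfl⟩⟩⟩, he⟩
  have hE₀c : (E₀.card : ℝ) ≤ K * (Fintype.card V * t) := by
    have h1 : (E₀.card : ℝ) ≤ ∑ i ∈ Finset.range K, ∑ u : V, ((bun G.dist A i u).card : ℝ) := by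
      have : E₀.card ≤ ∑ i ∈ Finset.range K, ∑ u : V, (bun G.dist A i u).card :=
        (Finset.card_filter_le _ _).trans <| Finset.card_biUnion_le.trans <|
          Finset.sum_le_sum fun i _ => Finset.card_biUnion_le.trans <|
            Finset.sum_le_sum fun u _ => Finset.card_image_le
      exact_mod_cast this
    refine h1.trans ((Finset.sum_le_sum fun i _ => Finset.sum_le_sum fun u _ => (hb i u).le).trans ?_)
    simp
  let E : Finset (V × V) := E₀ ∪ E₀.image Prod.swap
  have hE₀G : E₀ ⊆ G.edges := fun e he => (Finset.mem_filter.1 he).2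
  have hEs : ∀ e ∈ E, e.swap ∈ E := by
    intro e he
    rcases Finset.mem_union.1 he with he | he
    · exact Finset.mem_union_right _ (Finset.mem_image_of_mem _ he)
    · obtain ⟨f, hf, rfl⟩ := Finset.mem_image.1 he
      exact Finset.mem_union_left _ (by simpa using hf)
  refine ⟨E, ?_, hEs, ?_, ?_⟩
  · refine Finset.union_subset hE₀G fun e he => ?_
    obtain ⟨f, hf, rfl⟩ := Finset.mem_image.1 he
    exact (hs f (hE₀G hf)).1
  · have : E.card ≤ E₀.card + E₀.card :=
      (Finset.card_union_le _ _).trans (Nat.add_le_add_left Finset.card_image_le _)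
    have : (E.card : ℝ) ≤ E₀.card + E₀.card := by exact_mod_cast this
    linarith
  · have hE : ∀ x y a, 0 ≤ a → (∃ i < K, Bun G.dist A i x y) →
        G.dist x y ≤ ENNReal.ofReal a → MW G E 0 a x y := by
      rintro x y a ha ⟨i, hi, hB⟩ hd
      have hr : G.Reachable x y :=
        reachable_of_dist_lt (hd.trans_lt ENNReal.ofReal_lt_top)
      obtain ⟨l, hl, hlw, hlE⟩ := tree_walk hG y (fun u => Bun G.dist A i u y) E
        (fun u hu he => Finset.mem_union_left _ (hmemE₀ i hi u y hu he))
        (fun e heG he heq => ⟨he.1, fun b hbA => by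
          -- Moving along a shortest path shrinks the distance to `y` by the full edge weight,
          -- and the distance to `A (i + 1)` by no more than that.
          have h1 := he.2 b hbA
          have h2 : G.dist e.1 e.2 ≤ ENNReal.ofReal (wt G [e]) := dist_le_of_walk ⟨heG, rfl, rfl⟩
          rw [wt_cons, wt_nil, add_zero] at h2
          have h3 : G.dist e.1 b ≤ ENNReal.ofReal (G.w e) + G.dist e.2 b :=
            (dist_triangle hG _ e.2 _).trans (by gcongr)
          rw [heq] at h1
          exact lt_of_add_lt_add_left (h1.trans_le h3)⟩) x hB hr
      rw [(best_spec hG hr).dist_eq, ENNReal.ofReal_le_ofReal_iff ha] at hd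
      refine ⟨l, hl, by rw [hlw]; exact hd, ?_⟩
      rw [Nat.le_zero, List.countP_eq_zero]
      simpa using fun a b h => hlE (a, b) h
    intro x y l hl
    obtain ⟨K, rfl⟩ : ∃ K', K = K' + 1 := ⟨K - 1, by omega⟩
    rcases replace_or_near hs hG hA0 hA hAK hEs hE m K (by omega) (by omega) x y l hl with
      h | ⟨z, hz, -⟩
    · refine h.mono le_rfl (mul_le_mul_of_nonneg_right ?_ (wt_nonneg hG l))
      have : (8 : ℝ) * K / m ≤ 8 * (K + 1 : ℕ) / m := by
        gcongr
        simp
      linarith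
    · rw [hAK] at hz
      simp at hz

end Missing

/-! ### The sourcewise spanner -/

section Sourcewise

variable {V : Type} {G : WDigraph V}

lemma walk_sub {E : Finset (V × V)} {u v : V} {l : List (V × V)} (h : IsWalkFrom G u v l)
    (hl : ∀ e ∈ l, e ∈ E) : IsWalkFrom (G.sub E) u v l := by
  induction l generalizing u with
  | nil => exact h
  | cons e l ih =>
    exact ⟨hl e List.mem_cons_self, h.2.1, ih h.2.2 fun f hf => hl f (List.mem_cons_of_mem _ hf)⟩

/-- Adding the at most `β` missing edges of one walk per pair to a missing spanner gives a
`ρ`-approximate preserver of the pairs in `P`. -/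
lemma exists_preserver [Fintype V] [DecidableEq V] (hs : G.Symmetric) (hG : G.Nonneg)
    {E : Finset (V × V)} (hEG : E ⊆ G.edges) (hEs : ∀ e ∈ E, e.swap ∈ E) {β : ℕ} {ρ : ℝ}
    (hρ : 0 < ρ) (hE : ∀ x y l, IsWalkFrom G x y l → MW G E β (ρ * wt G l) x y)
    (P : Finset (V × V)) :
    ∃ F ⊆ G.edges, (∀ e ∈ F, e.swap ∈ F) ∧ F.card ≤ E.card + 2 * (P.card * β) ∧
      ∀ p ∈ P, (G.sub F).dist p.1 p.2 ≤ ENNReal.ofReal ρ * G.dist p.1 p.2 := by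
  have hex : ∀ p : V × V, ∃ l : List (V × V), (∀ e ∈ l, e ∈ G.edges) ∧
      l.countP (fun e => decide (e ∉ E)) ≤ β ∧ (G.Reachable p.1 p.2 →
        IsWalkFrom G p.1 p.2 l ∧
        ENNReal.ofReal (wt G l) ≤ ENNReal.ofReal ρ * G.dist p.1 p.2) := by
    intro p
    by_cases hr : G.Reachable p.1 p.2
    · obtain ⟨b, hb⟩ := exists_best hG hr
      obtain ⟨l, h1, h2, h3⟩ := hE _ _ b hb.1
      refine ⟨l, walk_mem h1, h3, fun _ => ⟨h1, ?_⟩⟩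
      rw [hb.dist_eq, ← ENNReal.ofReal_mul hρ.le]
      exact ENNReal.ofReal_le_ofReal h2
    · exact ⟨[], by simp, by simp, fun h => absurd h hr⟩
  choose f hfG hfc hfr using hex
  let F₀ : Finset (V × V) :=
    P.biUnion fun p => ((f p).filter (fun e => decide (e ∉ E))).toFinset
  have hF₀G : F₀ ⊆ G.edges := by
    intro e he
    obtain ⟨p, -, he⟩ := Finset.mem_biUnion.1 he
    exact hfG p e (List.mem_filter.1 (List.mem_toFinset.1 he)).1
  have hF₀c : F₀.card ≤ P.card * β := by
    refine Finset.card_biUnion_le_card_mul _ _ _ fun p _ => ?_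
    refine (List.toFinset_card_le _).trans ?_
    rw [← List.countP_eq_length_filter]
    exact hfc p
  refine ⟨E ∪ (F₀ ∪ F₀.image Prod.swap), ?_, ?_, ?_, ?_⟩
  · refine Finset.union_subset hEG (Finset.union_subset hF₀G fun e he => ?_)
    obtain ⟨g, hg, rfl⟩ := Finset.mem_image.1 he
    exact (hs g (hF₀G hg)).1
  · intro e he
    simp only [Finset.mem_union, Finset.mem_image] at he ⊢
    rcases he with he | he | ⟨g, hg, rfl⟩
    · exact Or.inl (hEs e he)
    · exact Or.inr (Or.inr ⟨e, he, rfl⟩)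
    · exact Or.inr (Or.inl (by simpa using hg))
  · have h1 := Finset.card_union_le E (F₀ ∪ F₀.image Prod.swap)
    have h2 := Finset.card_union_le F₀ (F₀.image Prod.swap)
    have h3 : (F₀.image Prod.swap).card ≤ F₀.card := Finset.card_image_le
    omega
  · intro p hp
    by_cases hr : G.Reachable p.1 p.2
    · obtain ⟨h1, h2⟩ := hfr p hr
      refine le_trans (dist_le_of_walk (walk_sub h1 fun e he => ?_)) h2
      by_cases heE : e ∈ E
      · exact Finset.mem_union_left _ heE
      · refine Finset.mem_union_right _ (Finset.mem_union_left _ ?_)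
        exact Finset.mem_biUnion.2 ⟨p, hp, List.mem_toFinset.2 (List.mem_filter.2
          ⟨he, by simpa using heE⟩)⟩
    · have htop : G.dist p.1 p.2 = ⊤ := by
        by_contra h
        exact hr (reachable_of_dist_lt (lt_top_iff_ne_top.2 h))
      rw [htop, ENNReal.mul_top (by simpa using hρ)]
      exact le_top

/-- The construction for a fixed graph: preserve the distance from every vertex to its nearest
source, and those of the Thorup–Zwick `(2k-1)`-spanner of the metric on `S`. -/
lemma exists_sourcewise [Fintype V] [DecidableEq V] (hs : G.Symmetric) (hG : G.Nonneg)
    {E : Finset (V × V)} (hEG : E ⊆ G.edges) (hEs : ∀ e ∈ E, e.swap ∈ E) {β : ℕ} {ρ : ℝ}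
    (hρ : 0 < ρ) (hE : ∀ x y l, IsWalkFrom G x y l → MW G E β (ρ * wt G l) x y)
    (S : Finset V) (hS : S.Nonempty) (k : ℕ) (hk1 : 1 ≤ k) (t : ℝ) (ht : 0 < t)
    (hk : S.card * ((2 * Real.log (Fintype.card V) + 1) / t) ^ k < 1) :
    ∃ F ⊆ G.edges, (∀ e ∈ F, e.swap ∈ F) ∧
      (F.card : ℝ) ≤ E.card + 2 * ((Fintype.card V + k * (S.card * t)) * β) ∧
      ∀ s ∈ S, ∀ v, (G.sub F).dist s v ≤
        ENNReal.ofReal (ρ * (4 * k - 1)) * G.dist s v := by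
  obtain ⟨A, hA0, hA, hAK, hb⟩ := exists_hierarchy G.dist S t ht k hk
  choose p hpS hp using fun v => Finset.exists_min_image S (G.dist v) hS
  let P₁ : Finset (V × V) := Finset.univ.image fun v => (v, p v)
  let P₂ : Finset (V × V) := (Finset.range k).biUnion fun i =>
    S.biUnion fun u => (bun G.dist A i u).image fun v => (u, v)
  have hP₁ : P₁.card ≤ Fintype.card V := Finset.card_image_le
  have hP₂ : (P₂.card : ℝ) ≤ k * (S.card * t) := by
    have h1 : (P₂.card : ℝ) ≤ ∑ i ∈ Finset.range k, ∑ u ∈ S, ((bun G.dist A i u).card : ℝ) := by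
      have : P₂.card ≤ ∑ i ∈ Finset.range k, ∑ u ∈ S, (bun G.dist A i u).card :=
        Finset.card_biUnion_le.trans <|
          Finset.sum_le_sum fun i _ => Finset.card_biUnion_le.trans <|
            Finset.sum_le_sum fun u _ => Finset.card_image_le
      exact_mod_cast this
    refine h1.trans
      ((Finset.sum_le_sum fun i _ => Finset.sum_le_sum fun u _ => (hb i u).le).trans ?_)
    simp
  obtain ⟨F, hFG, hFs, hFc, hFd⟩ := exists_preserver hs hG hEG hEs hρ hE (P₁ ∪ P₂)
  refine ⟨F, hFG, hFs, ?_, ?_⟩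
  · have h1 : ((P₁ ∪ P₂).card : ℝ) ≤ Fintype.card V + k * (S.card * t) := by
      have h2 : ((P₁ ∪ P₂).card : ℝ) ≤ P₁.card + P₂.card := by
        exact_mod_cast Finset.card_union_le _ _
      have h3 : (P₁.card : ℝ) ≤ Fintype.card V := by exact_mod_cast hP₁
      linarith
    have h2 : (F.card : ℝ) ≤ E.card + 2 * ((P₁ ∪ P₂).card * β) := by exact_mod_cast hFc
    refine h2.trans ?_
    gcongr
  · intro s hsS v
    have hs' : (G.sub F).Symmetric := fun e he => ⟨hFs e he, (hs e (hFG he)).2⟩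
    have hG' : (G.sub F).Nonneg := hG
    set r := ENNReal.ofReal ρ with hr
    have hbun : ∀ u ∈ S, ∀ z, (∃ i < k, Bun G.dist A i u z) →
        (G.sub F).dist u z ≤ r * G.dist u z := by
      rintro u hu z ⟨i, hi, hB⟩
      exact hFd (u, z) (Finset.mem_union_right _ (Finset.mem_biUnion.2 ⟨i, Finset.mem_range.2 hi,
        Finset.mem_biUnion.2 ⟨u, hu, Finset.mem_image.2 ⟨z, mem_bun.2 hB, rfl⟩⟩⟩))
    have hnear : (G.sub F).dist v (p v) ≤ r * G.dist s v := by
      refine (hFd (v, p v) (Finset.mem_union_left _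
        (Finset.mem_image_of_mem _ (Finset.mem_univ _)))).trans ?_
      rw [dist_comm hs s v]
      gcongr
      exact hp v s hsS
    have hsp : G.dist s (p v) ≤ 2 * G.dist s v := by
      calc G.dist s (p v) ≤ G.dist s v + G.dist v (p v) := dist_triangle hG _ _ _
        _ ≤ G.dist s v + G.dist s v := by
          gcongr
          rw [dist_comm hs s v]
          exact hp v s hsS
        _ = _ := by ring
    obtain ⟨z, hz1, hz2, hz⟩ := exists_pivot dist_self (dist_comm hs) (dist_triangle hG)
      hA hAK s (p v) (by rw [hA0]; exact hsS)
    have hcoef : ENNReal.ofReal (ρ * (4 * k - 1)) = r * ((2 * k - 1 : ℕ) * 2 + 1) := by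
      rw [ENNReal.ofReal_mul hρ.le, ← hr]
      congr 1
      have : (4 * (k : ℝ) - 1) = (((2 * k - 1) * 2 + 1 : ℕ) : ℝ) := by
        obtain ⟨j, rfl⟩ : ∃ j, k = j + 1 := ⟨k - 1, by omega⟩
        rw [show 2 * (j + 1) - 1 = 2 * j + 1 by omega]
        push_cast; ring
      rw [this, ENNReal.ofReal_natCast]
      push_cast; rfl
    calc (G.sub F).dist s v
        ≤ (G.sub F).dist s z + ((G.sub F).dist z (p v) + (G.sub F).dist (p v) v) :=
          (dist_triangle hG' _ z _).trans (by gcongr; exact dist_triangle hG' _ _ _)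
      _ ≤ r * G.dist s z + (r * G.dist (p v) z + r * G.dist s v) := by
          rw [dist_comm hs' z, dist_comm hs' (p v) v]
          exact add_le_add (hbun s hsS z hz1) (add_le_add (hbun _ (hpS v) z hz2) hnear)
      _ = r * ((G.dist s z + G.dist (p v) z) + G.dist s v) := by ring
      _ ≤ r * ((2 * k - 1 : ℕ) * (2 * G.dist s v) + G.dist s v) := by
          gcongr
          exact hz.trans (by gcongr)
      _ = _ := by rw [hcoef]; ring

end Sourcewise

/-! ### Choice of parameters -/

/-- The construction with bunch sizes `n ^ (2η)` in `G` and `σ ^ (1/k) n ^ η` in `S`, for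
`η = δ / 4`. The slack factor `n ^ η` absorbs the logarithm of each sampling step, and constants
are absorbed in `n ^ (2η)`. -/
lemma exists_sourcewise_spanner (k : ℕ) (hk : 1 ≤ k) (δ : ℝ) (hδ : 0 < δ) :
    ∃ n0 : ℕ, ∀ n ≥ n0, ∀ G : WDigraph (Fin n), G.Symmetric → G.Nonneg →
      ∀ S : Finset (Fin n),
        ∃ F ⊆ G.edges, (∀ e ∈ F, e.swap ∈ F) ∧
          (F.card : ℝ) ≤ (n : ℝ) ^ δ * ((n : ℝ) + (S.card : ℝ) ^ (1 + 1 / (k : ℝ))) ∧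
          ∀ s ∈ S, ∀ v, (G.sub F).dist s v ≤
            ENNReal.ofReal (4 * (k : ℝ) - 1 + δ) * G.dist s v := by
  set η : ℝ := δ / 4 with hη
  have hη0 : 0 < η := by positivity
  have hk0 : (1 : ℝ) ≤ k := by exact_mod_cast hk
  obtain ⟨K, hK⟩ := exists_nat_gt (1 / η)
  have hK0 : (0 : ℝ) < K := lt_trans (by positivity) hK
  have hK1 : 1 ≤ K := by exact_mod_cast hK0
  have hKη : 1 < K * η := by rwa [div_lt_iff₀ hη0] at hK
  -- `m` makes the overhead `(4k - 1) * 8K / m` at most `δ`.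
  obtain ⟨m, hm⟩ := exists_nat_ge (max (8 * (K : ℝ)) (8 * K * (4 * k - 1) / δ))
  have hm1 : 8 * K ≤ m := by exact_mod_cast (le_max_left _ _).trans hm
  have hm2 : 8 * K * (4 * k - 1) / δ ≤ (m : ℝ) := (le_max_right _ _).trans hm
  have hm0 : (0 : ℝ) < m := by
    have : 0 < m := by omega
    exact_mod_cast this
  set β := hops m (K - 1) with hβ
  set C : ℝ := 2 * K + 2 * β + 2 * (k * β) with hC
  have hlim : Filter.Tendsto (fun n : ℕ => (n : ℝ) ^ (2 * η)) Filter.atTop Filter.atTop :=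
    (tendsto_rpow_atTop (by positivity)).comp tendsto_natCast_atTop_atTop
  have hlog : ∀ᶠ n : ℕ in Filter.atTop, 2 * Real.log n + 1 < (n : ℝ) ^ η := by
    have h1 : Asymptotics.IsLittleO Filter.atTop (fun x : ℝ => 2 * Real.log x + 1)
        (fun x : ℝ => x ^ η) := by
      refine Asymptotics.IsLittleO.add ((isLittleO_log_rpow_atTop hη0).const_mul_left 2) ?_
      rw [Asymptotics.isLittleO_one_left_iff]
      exact tendsto_norm_atTop_atTop.comp (tendsto_rpow_atTop hη0)
    have h2 := (h1.bound (show (0 : ℝ) < 1 / 2 by norm_num))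
    have h3 := tendsto_natCast_atTop_atTop (R := ℝ) |>.eventually h2
    filter_upwards [h3, Filter.eventually_ge_atTop 1] with n hn hn1
    have hpos : 0 < (n : ℝ) ^ η := Real.rpow_pos_of_pos (by exact_mod_cast hn1) _
    rw [Real.norm_of_nonneg hpos.le] at hn
    have := (Real.le_norm_self _).trans hn
    linarith
  obtain ⟨n0, hn0⟩ := Filter.eventually_atTop.1
    ((hlog.and (hlim.eventually_ge_atTop C)).and (Filter.eventually_ge_atTop 2))
  refine ⟨n0, fun n hn G hs hG S => ?_⟩
  obtain ⟨⟨hL, hCn⟩, hn2⟩ := hn0 n hn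
  rcases S.eq_empty_or_nonempty with rfl | hS
  · exact ⟨∅, by simp, by simp, by simp only [Finset.card_empty, Nat.cast_zero]; positivity,
      by simp⟩
  have hn1 : (1 : ℝ) < n := by exact_mod_cast hn2
  have hnpos : (0 : ℝ) < n := by linarith
  set c : ℝ := 2 * Real.log n + 1 with hc
  have hc0 : 0 < c := by
    have : 0 < Real.log n := Real.log_pos hn1
    positivity
  have hηpos : 0 < (n : ℝ) ^ η := Real.rpow_pos_of_pos hnpos _
  have h2η : (n : ℝ) ^ (2 * η) = (n : ℝ) ^ η * (n : ℝ) ^ η := by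
    rw [two_mul, Real.rpow_add hnpos]
  have hη1 : 1 ≤ (n : ℝ) ^ η := Real.one_le_rpow hn1.le hη0.le
  obtain ⟨E, hEG, hEs, hEc, hE⟩ := exists_missing_spanner hs hG m K hK1 hm1 ((n : ℝ) ^ (2 * η))
    (by positivity) (by
      rw [Fintype.card_fin]
      have h1 : c / (n : ℝ) ^ (2 * η) ≤ (n : ℝ) ^ (-η) := by
        rw [div_le_iff₀ (by positivity), ← Real.rpow_add hnpos]
        rw [show -η + 2 * η = η by ring]
        exact hL.le
      calc (n : ℝ) * (c / (n : ℝ) ^ (2 * η)) ^ K ≤ n * ((n : ℝ) ^ (-η)) ^ K := by gcongr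
        _ = (n : ℝ) ^ (1 - K * η) := by
          rw [← Real.rpow_mul_natCast hnpos.le, ← Real.rpow_one_add' hnpos.le]
          · congr 1; ring
          · nlinarith
        _ < 1 := Real.rpow_lt_one_of_one_lt_of_neg hn1 (by linarith))
  have hσ : (0 : ℝ) < S.card := by exact_mod_cast hS.card_pos
  set τ : ℝ := (S.card : ℝ) ^ (1 / (k : ℝ)) with hτ
  have hτ0 : 0 < τ := Real.rpow_pos_of_pos hσ _
  have hτk : τ ^ k = S.card := by
    rw [hτ, ← Real.rpow_mul_natCast hσ.le, one_div, inv_mul_cancel₀ (by positivity),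
      Real.rpow_one]
  obtain ⟨F, hFG, hFs, hFc, hFd⟩ := exists_sourcewise hs hG hEG hEs
    (show (0 : ℝ) < 1 + 8 * K / m by positivity) hE S hS k hk (τ * (n : ℝ) ^ η)
    (by positivity) (by
      rw [Fintype.card_fin, div_pow, mul_pow, hτk]
      rw [mul_div_mul_left _ _ hσ.ne' |> fun h => (mul_div_assoc _ _ _).symm.trans h,
        div_lt_one (by positivity)]
      exact pow_lt_pow_left₀ hL hc0.le (by omega))
  refine ⟨F, hFG, hFs, ?_, fun s hsS v => (hFd s hsS v).trans ?_⟩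
  · rw [Fintype.card_fin] at hFc hEc
    have hστ : (S.card : ℝ) ^ (1 + 1 / (k : ℝ)) = S.card * τ := by
      rw [Real.rpow_add hσ, Real.rpow_one]
    have hδη : (n : ℝ) ^ δ = (n : ℝ) ^ (2 * η) * (n : ℝ) ^ (2 * η) := by
      rw [← Real.rpow_add hnpos]; congr 1; rw [hη]; ring
    rw [hστ, hδη]
    set N := (n : ℝ) ^ (2 * η) with hN
    have hN1 : (n : ℝ) ^ η ≤ N := by rw [h2η]; nlinarith
    have hN2 : 1 ≤ N := hη1.trans hN1
    calc (F.card : ℝ) ≤ 2 * (K * (n * N)) + 2 * ((n + k * (S.card * (τ * (n : ℝ) ^ η))) * β) := by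
          linarith
      _ ≤ 2 * (K * (n * N)) + 2 * ((n * N + k * (S.card * (τ * N))) * β) := by
          gcongr
          exact le_mul_of_one_le_right hnpos.le hN2
      _ = N * ((2 * K + 2 * β) * n + (2 * (k * β)) * (S.card * τ)) := by ring
      _ ≤ N * (C * n + C * (S.card * τ)) := by
          have h1 : (0 : ℝ) ≤ k * β := by positivity
          have h2 : (0 : ℝ) ≤ β := by positivity
          gcongr
          · rw [hC]; linarith
          · rw [hC]; linarith
      _ = N * (C * (n + S.card * τ)) := by ring
      _ ≤ N * (N * (n + S.card * τ)) := by gcongr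
      _ = _ := by ring
  · gcongr
    rw [one_add_mul]
    have : 8 * K / m * (4 * (k : ℝ) - 1) ≤ δ := by
      rw [div_le_iff₀ hδ] at hm2
      rw [div_mul_eq_mul_div, div_le_iff₀ hm0]
      linarith
    linarith

end Hopsets

open Hopsets in
/-- For every integer `k ≥ 1` and `δ > 0`, for all large enough `n`,
every `n`-vertex undirected graph with nonnegative polynomially bounded weights and
every `S ⊆ V` with `|S| = σ` admits an `S`-sourcewise `(4k−1+δ)`-spanner with at most
`n^δ·(n + σ^{1+1/k})` edges. -/
theorem stmt_12 (k : ℕ) (hk : 1 ≤ k) (δ : ℝ) (hδ : 0 < δ) (q : ℕ) :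
    ∃ n0 : ℕ, ∀ n ≥ n0, ∀ G : WDigraph (Fin n),
      G.Symmetric → G.Nonneg → G.PolyBounded q →
      ∀ S : Finset (Fin n),
        ∃ Estar ⊆ G.edges, (∀ e ∈ Estar, (e.2, e.1) ∈ Estar) ∧
          (Estar.card : ℝ) ≤ (n : ℝ) ^ δ * ((n : ℝ) + (S.card : ℝ) ^ (1 + 1 / (k : ℝ))) ∧
          ∀ s ∈ S, ∀ v, (G.sub Estar).dist s v ≤
            ENNReal.ofReal (4 * (k : ℝ) - 1 + δ) * G.dist s v := by
  obtain ⟨n0, h⟩ := exists_sourcewise_spanner k hk δ hδ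
  exact ⟨n0, fun n hn G hs hG _ S => h n hn G hs hG S⟩
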